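/- Let F = (f₁,…,f_k) : ℝ^n → ℝ^k, k ≤ n, be a polynomial mapping with every f_j nonconstant and f_j(0) = 0, and suppose every f_j is convenient. If F is non-degenerate at infinity in the sense of Bivià-Ausina, then F is non-degenerate at infinity. -/

import Mathlib

open MvPolynomial Filter

/-- The linear form `l_p(ν) = ∑ i, p i * ν i`. -/
def lP {n : ℕ} (p : Fin n → ℤ) (ν : Fin n →₀ ℕ) : ℤ := ∑ i, p i * (ν i : ℤ)

/-- `d_p(f)`: the minimum of `l_p` over `{0} ∪ supp(f)`. -/
noncomputable def dP {n : ℕ} (p : Fin n → ℤ) (f : MvPolynomial (Fin n) ℝ) : ℤ :=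
  (insert (0 : Fin n →₀ ℕ) f.support).inf' (Finset.insert_nonempty _ _) (lP p)

/-- The face polynomial `f_p`: the sum of the monomials of `f` whose exponent `ν`
satisfies `l_p(ν) = d_p(f)` (zero if no `ν ∈ supp(f)` attains the minimum). -/
noncomputable def facePoly {n : ℕ} (p : Fin n → ℤ) (f : MvPolynomial (Fin n) ℝ) :
    MvPolynomial (Fin n) ℝ :=
  ∑ ν ∈ f.support.filter (fun ν => lP p ν = dP p f), monomial ν (coeff ν f)

/-- The gradient vector of a polynomial at a point (as a plain vector of `ℝⁿ`). -/
noncomputable def rgradV {n : ℕ} (f : MvPolynomial (Fin n) ℝ) (x : Fin n → ℝ) :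
    Fin n → ℝ :=
  fun i => eval x (pderiv i f)

/-- `I_p = {j : d_p(f_j) < 0}`. -/
noncomputable def Iset {n k : ℕ} (p : Fin n → ℤ) (f : Fin k → MvPolynomial (Fin n) ℝ) :
    Set (Fin k) :=
  { j | dP p (f j) < 0 }

/-- `J_p = {j : l_p(ν) > 0 for all ν ∈ supp(f_j)}`. -/
def Jset {n k : ℕ} (p : Fin n → ℤ) (f : Fin k → MvPolynomial (Fin n) ℝ) :
    Set (Fin k) :=
  { j | ∀ ν ∈ (f j).support, 0 < lP p ν }

/-- `F` is non-degenerate at infinity. -/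
noncomputable def NondegAtInfinity {n k : ℕ} (f : Fin k → MvPolynomial (Fin n) ℝ) :
    Prop :=
  ∀ p : Fin n → ℤ, (∃ i, p i < 0) → (Iset p f).Nonempty → Jset p f = ∅ →
    ∀ x : Fin n → ℝ, (∀ i, x i ≠ 0) →
      (∀ j ∈ Iset p f, eval x (facePoly p (f j)) = 0) →
      LinearIndependent ℝ (fun j : Iset p f => rgradV (facePoly p (f j)) x)

/-- `f` is convenient: its support meets every coordinate axis. -/
def Convenient {n : ℕ} (f : MvPolynomial (Fin n) ℝ) : Prop :=
  ∀ i : Fin n, ∃ m : ℕ, 1 ≤ m ∧ Finsupp.single i m ∈ f.support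

/-- `F` is non-degenerate at infinity in the sense of Bivià-Ausina. -/
noncomputable def BANondegAtInfinity {n k : ℕ} (f : Fin k → MvPolynomial (Fin n) ℝ) :
    Prop :=
  ∀ p : Fin n → ℤ, (∃ i, p i < 0) →
    ¬ ∃ x : Fin n → ℝ, (∀ i, x i ≠ 0) ∧ ∀ j, eval x (facePoly p (f j)) = 0

/-!
Fix `p` with `p i < 0`. Convenience puts some pure power `x_i ^ m` into every `f_j`, and its weight
`p i * m` is negative, so `d_p(f_j) < 0` for all `j`: the set `I_p` contains every index. A common
zero of the face polynomials indexed by `I_p` is then a common zero of all of them, which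
Bivià-Ausina's condition forbids, so there is no point left at which linear independence of the
gradients could fail.
-/

lemma lP_single {n : ℕ} (p : Fin n → ℤ) (i : Fin n) (m : ℕ) :
    lP p (Finsupp.single i m) = p i * m := by
  simp [lP, Finsupp.single_apply]

lemma dP_le_lP {n : ℕ} (p : Fin n → ℤ) {f : MvPolynomial (Fin n) ℝ} {ν : Fin n →₀ ℕ}
    (hν : ν ∈ f.support) : dP p f ≤ lP p ν :=
  Finset.inf'_le _ (Finset.mem_insert_of_mem hν)

lemma Convenient.dP_neg {n : ℕ} {f : MvPolynomial (Fin n) ℝ} (hf : Convenient f)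
    {p : Fin n → ℤ} {i : Fin n} (hi : p i < 0) : dP p f < 0 := by
  obtain ⟨m, hm, hsupp⟩ := hf i
  calc
    dP p f ≤ lP p (Finsupp.single i m) := dP_le_lP p hsupp
    _ = p i * m := lP_single p i m
    _ < 0 := mul_neg_of_neg_of_pos hi (by exact_mod_cast hm)

lemma Iset_eq_univ_of_convenient {n k : ℕ} {f : Fin k → MvPolynomial (Fin n) ℝ}
    (hconv : ∀ j, Convenient (f j)) {p : Fin n → ℤ} (hp : ∃ i, p i < 0) :
    Iset p f = Set.univ :=
  let ⟨_, hi⟩ := hp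
  Set.eq_univ_of_forall fun j => (hconv j).dP_neg hi

theorem nondeg_of_BAnondeg_general {n k : ℕ} (f : Fin k → MvPolynomial (Fin n) ℝ)
    (hconv : ∀ j, Convenient (f j)) (hba : BANondegAtInfinity f) :
    NondegAtInfinity f := by
  intro p hp _ _ x hx hface
  have hI : Iset p f = Set.univ := Iset_eq_univ_of_convenient hconv hp
  have hface_all : ∀ j, eval x (facePoly p (f j)) = 0 := fun j => hface j (hI ▸ Set.mem_univ j)
  exact absurd ⟨x, hx, hface_all⟩ (hba p hp)

/-- For `F : ℝⁿ → ℝᵏ`, `k ≤ n`, with all components nonconstant,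
vanishing at `0` and convenient, Bivià-Ausina non-degeneracy at infinity implies
non-degeneracy at infinity. -/
theorem nondeg_of_BAnondeg {n k : ℕ} (hkn : k ≤ n)
    (f : Fin k → MvPolynomial (Fin n) ℝ)
    (hnc : ∀ j, (f j).totalDegree ≠ 0)
    (h0 : ∀ j, eval (0 : Fin n → ℝ) (f j) = 0)
    (hconv : ∀ j, Convenient (f j))
    (hba : BANondegAtInfinity f) :
    NondegAtInfinity f :=
  nondeg_of_BAnondeg_general f hconv hba
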